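/- (Proposition 1) Let L be a symmetric positive semidefinite real n×n matrix such that I − L is also positive semidefinite, let P = I − L, and let E(H) = trace(Hᵀ L H). Then for every real n×d matrix X, every natural number l, and every real α with 0 ≤ α ≤ 1, the combined output of the MLP branch X and the GCN branch Y = P^l X has Dirichlet energy at least that of the GCN branch alone: E(αX + (1−α)P^l X) ≥ E(P^l X). -/

import Mathlib

open Matrix BigOperators

/-!
Write `Y = P ^ l * X` and `D = X - Y`, so that the mixture is `Y + α • D`, and let `B` be the
sesquilinear form of the energy. Then `E (Y + α • D) = E Y + α * (2 * B Y D + α * E D)`. The cross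
terms `B (P ^ m * X) D` are nonnegative: the geometric sum factors `1 - P ^ l` through `1 - P = L`,
which turns `P ^ m * L * (1 - P ^ l)` into a sum of congruences `L * P ^ (m + k) * L`. If `L` is
positive semidefinite, then `0 ≤ E D` finishes the proof; if `α ≤ 2`, then
`2 * B Y D + α * E D = (2 - α) * B Y D + α * B X D` does.
-/

section DirichletForm

variable {R n d : Type*} [Fintype n] [Fintype d]

section Ring

variable [Ring R] [StarRing R]

/-- The sesquilinear form polarizing the Dirichlet energy; `Gᴴ` is `Gᵀ` over the reals. -/
def dirichletForm (L : Matrix n n R) (G H : Matrix n d R) : R :=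
  (Gᴴ * L * H).trace

/-- The Dirichlet energy `E(H) = trace(Hᴴ L H)` of the features `H` with respect to the
Laplacian `L`, as the diagonal of `dirichletForm`. -/
def dirichletEnergy (L : Matrix n n R) (H : Matrix n d R) : R :=
  dirichletForm L H H

theorem star_dirichletForm {L : Matrix n n R} (hL : L.IsHermitian) (G H : Matrix n d R) :
    star (dirichletForm L G H) = dirichletForm L H G := by
  rw [dirichletForm, dirichletForm, ← trace_conjTranspose]
  simp only [conjTranspose_mul, conjTranspose_conjTranspose, hL.eq, Matrix.mul_assoc]

theorem dirichletForm_sub_left (L : Matrix n n R) (G₁ G₂ H : Matrix n d R) :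
    dirichletForm L (G₁ - G₂) H = dirichletForm L G₁ H - dirichletForm L G₂ H := by
  simp only [dirichletForm, conjTranspose_sub, Matrix.sub_mul, trace_sub]

variable [PartialOrder R] [StarOrderedRing R]

theorem dirichletEnergy_nonneg {L : Matrix n n R} (hL : L.PosSemidef) (H : Matrix n d R) :
    0 ≤ dirichletEnergy L H :=
  (hL.conjTranspose_mul_mul_same H).trace_nonneg

variable [DecidableEq n]

theorem posSemidef_pow_mul_one_sub_mul_one_sub_pow {P : Matrix n n R} (hP : P.PosSemidef)
    (m l : ℕ) : (P ^ m * (1 - P) * (1 - P ^ l)).PosSemidef := by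
  have hcomm : P ^ m * (1 - P) = (1 - P) * P ^ m :=
    ((Commute.one_right _).sub_right (Commute.pow_self P m)).eq
  have hherm : (1 - P)ᴴ = 1 - P := (isHermitian_one.sub hP.isHermitian).eq
  have hsum : P ^ m * (1 - P) * (1 - P ^ l) =
      ∑ k ∈ Finset.range l, (1 - P)ᴴ * P ^ (m + k) * (1 - P) := by
    rw [hherm, hcomm, ← geom_sum_mul_neg P l]
    simp only [pow_add, Finset.sum_mul, Finset.mul_sum, Matrix.mul_assoc]
  rw [hsum]
  exact posSemidef_sum _ fun k _ => (hP.pow (m + k)).conjTranspose_mul_mul_same (1 - P)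

theorem dirichletForm_pow_mul_sub_pow_mul_nonneg {P : Matrix n n R} (hP : P.PosSemidef)
    (X : Matrix n d R) (m l : ℕ) :
    0 ≤ dirichletForm (1 - P) (P ^ m * X) (X - P ^ l * X) := by
  have hcongr : (P ^ m * X)ᴴ * (1 - P) * (X - P ^ l * X) =
      Xᴴ * (P ^ m * (1 - P) * (1 - P ^ l)) * X := by
    have hfactor : X - P ^ l * X = (1 - P ^ l) * X := by rw [Matrix.sub_mul, Matrix.one_mul]
    rw [hfactor, conjTranspose_mul, (hP.pow m).isHermitian.eq]
    simp only [Matrix.mul_assoc]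
  rw [dirichletForm, hcongr]
  exact ((posSemidef_pow_mul_one_sub_mul_one_sub_pow hP m l).conjTranspose_mul_mul_same
    X).trace_nonneg

end Ring

section CommRing

variable [CommRing R] [StarRing R]

theorem dirichletEnergy_add_smul (L : Matrix n n R) (G H : Matrix n d R) {α : R}
    (hα : IsSelfAdjoint α) :
    dirichletEnergy L (G + α • H) = dirichletEnergy L G +
      α * (dirichletForm L G H + dirichletForm L H G + α * dirichletEnergy L H) := by
  simp only [dirichletEnergy, dirichletForm, conjTranspose_add, conjTranspose_smul, hα.star_eq,
    Matrix.add_mul, Matrix.mul_add, Matrix.smul_mul, Matrix.mul_smul, trace_add, trace_smul,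
    smul_eq_mul]
  ring

variable [PartialOrder R] [StarOrderedRing R] [DecidableEq n]

theorem mlp_partner_raises_energy_general {L : Matrix n n R} (hIL : (1 - L).PosSemidef)
    (X : Matrix n d R) (l : ℕ) {α : R} (hα : 0 ≤ α) (hLα : L.PosSemidef ∨ α ≤ 2) :
    dirichletEnergy L ((1 - L) ^ l * X) ≤
      dirichletEnergy L (α • X + (1 - α) • ((1 - L) ^ l * X)) := by
  have hcross (m : ℕ) : 0 ≤ dirichletForm L ((1 - L) ^ m * X) (X - (1 - L) ^ l * X) := by
    simpa only [sub_sub_cancel] using dirichletForm_pow_mul_sub_pow_mul_nonneg hIL X m l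
  have hL : L.IsHermitian := by
    simpa only [sub_sub_cancel] using isHermitian_one.sub hIL.isHermitian
  have hX : 0 ≤ dirichletForm L X (X - (1 - L) ^ l * X) := by
    simpa only [pow_zero, Matrix.one_mul] using hcross 0
  have hY := hcross l
  set Y := (1 - L) ^ l * X
  have hmix : α • X + (1 - α) • Y = Y + α • (X - Y) := by module
  have hsymm : dirichletForm L (X - Y) Y = dirichletForm L Y (X - Y) := by
    rw [← star_dirichletForm hL, (IsSelfAdjoint.of_nonneg hY).star_eq]
  rw [hmix, dirichletEnergy_add_smul L Y (X - Y) (.of_nonneg hα), hsymm]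
  refine le_add_of_nonneg_right (mul_nonneg hα ?_)
  rcases hLα with hLpos | hα2
  · exact add_nonneg (add_nonneg hY hY) (mul_nonneg hα (dirichletEnergy_nonneg hLpos (X - Y)))
  · calc 0 ≤ (2 - α) * dirichletForm L Y (X - Y) + α * dirichletForm L X (X - Y) :=
          add_nonneg (mul_nonneg (sub_nonneg.mpr hα2) hY) (mul_nonneg hα hX)
      _ = dirichletForm L Y (X - Y) + dirichletForm L Y (X - Y) +
          α * dirichletEnergy L (X - Y) := by
          rw [dirichletEnergy, dirichletForm_sub_left]; ring

end CommRing

end DirichletForm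

/-- Proposition 1: the MLP partner raises the Dirichlet energy of the last layer's
embeddings, i.e. `E(αX + (1−α)P^l X) ≥ E(P^l X)`. -/
theorem mlp_partner_raises_energy (n d : ℕ) (L : Matrix (Fin n) (Fin n) ℝ)
    (hL : L.PosSemidef) (hIL : ((1 : Matrix (Fin n) (Fin n) ℝ) - L).PosSemidef)
    (P : Matrix (Fin n) (Fin n) ℝ) (hP : P = 1 - L)
    (X : Matrix (Fin n) (Fin d) ℝ) (l : ℕ) (α : ℝ) (hα0 : 0 ≤ α) (hα1 : α ≤ 1) :
    ((P ^ l * X)ᵀ * L * (P ^ l * X)).trace ≤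
      ((α • X + (1 - α) • (P ^ l * X))ᵀ * L *
        (α • X + (1 - α) • (P ^ l * X))).trace := by
  subst hP
  simpa only [dirichletEnergy, dirichletForm, conjTranspose_eq_transpose_of_trivial] using
    mlp_partner_raises_energy_general hIL X l hα0 (.inl hL)
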